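/- Truth lemma: For each state w of the canonical game and each formula φ ∈ Φ, w ⊨ φ if and only if φ ∈ F(w). -/

import Mathlib

/- Language: formulas over atomic propositions P, data variables V, actors 𝒜 = A.
   `bel T X φ` is B^T_X φ ; `str C T X φ` is [C]^T_X φ. -/
inductive Formula (P V A : Type) : Type
  | atom : P → Formula P V A
  | neg : Formula P V A → Formula P V A
  | imp : Formula P V A → Formula P V A → Formula P V A
  | bel : Set V → Set V → Formula P V A → Formula P V A
  | str : Set A → Set V → Set V → Formula P V A → Formula P V A

variable {P V A : Type}

/-- Propositional tautologies: true under every valuation respecting ¬ and →. -/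
def Tautology (φ : Formula P V A) : Prop :=
  ∀ v : Formula P V A → Prop,
    (∀ ψ, v (Formula.neg ψ) ↔ ¬ v ψ) →
    (∀ ψ χ, v (Formula.imp ψ χ) ↔ (v ψ → v χ)) →
    v φ

/-- Theorems of the logical system of doxastic strategies. -/
inductive Thm : Formula P V A → Prop
  | taut {φ : Formula P V A} : Tautology φ → Thm φ
  | truth {X : Set V} {φ : Formula P V A} :
      Thm (Formula.imp (Formula.bel ∅ X φ) φ)
  | negIntro {T X : Set V} {φ : Formula P V A} :
      Thm (Formula.imp (Formula.neg (Formula.bel T X φ))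
        (Formula.bel ∅ X (Formula.neg (Formula.bel T X φ))))
  | distrib {T X : Set V} {φ ψ : Formula P V A} :
      Thm (Formula.imp (Formula.bel T X (Formula.imp φ ψ))
        (Formula.imp (Formula.bel T X φ) (Formula.bel T X ψ)))
  | trust {T X Y : Set V} {φ : Formula P V A} :
      Thm (Formula.bel T X (Formula.imp (Formula.bel T Y φ) φ))
  | monoB {T T' X X' : Set V} {φ : Formula P V A} :
      T ⊆ T' → X ⊆ X' →
      Thm (Formula.imp (Formula.bel T X φ) (Formula.bel T' X' φ))
  | monoS {C C' : Set A} {T T' X X' : Set V} {φ : Formula P V A} :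
      T ⊆ T' → X ⊆ X' → C ⊆ C' →
      Thm (Formula.imp (Formula.str C T X φ) (Formula.str C' T' X' φ))
  | coop {C D : Set A} {T X : Set V} {φ ψ : Formula P V A} :
      C ∩ D = ∅ →
      Thm (Formula.imp (Formula.str C T X (Formula.imp φ ψ))
        (Formula.imp (Formula.str D T X φ) (Formula.str (C ∪ D) T X ψ)))
  | strIntro₁ {C : Set A} {T X : Set V} {φ : Formula P V A} :
      Thm (Formula.imp (Formula.str C T X φ) (Formula.bel T X (Formula.str C T X φ)))
  | strIntro₂ {C : Set A} {T X : Set V} {φ : Formula P V A} :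
      Thm (Formula.imp (Formula.bel T X (Formula.str C T X φ)) (Formula.str C T X φ))
  | unavoid {T X Y : Set V} {φ : Formula P V A} :
      Thm (Formula.imp (Formula.bel T X (Formula.str ∅ T Y φ)) (Formula.str ∅ T X φ))
  | pub {T : Set V} {φ : Formula P V A} :
      Thm (Formula.imp (Formula.bel T ∅ φ) (Formula.str ∅ T ∅ φ))
  | mp {φ ψ : Formula P V A} : Thm (Formula.imp φ ψ) → Thm φ → Thm ψ
  | nec {φ : Formula P V A} : Thm φ → Thm (Formula.bel ∅ ∅ φ)

/-- `Deduces F φ`: φ is derivable from F together with the theorems using only Modus Ponens. -/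
inductive Deduces (F : Set (Formula P V A)) : Formula P V A → Prop
  | thm {φ : Formula P V A} : Thm φ → Deduces F φ
  | mem {φ : Formula P V A} : φ ∈ F → Deduces F φ
  | mp {φ ψ : Formula P V A} :
      Deduces F (Formula.imp φ ψ) → Deduces F φ → Deduces F ψ

def Consistent (F : Set (Formula P V A)) : Prop :=
  ¬ ∃ φ : Formula P V A, Deduces F φ ∧ Deduces F (Formula.neg φ)

def MaximalConsistent (F : Set (Formula P V A)) : Prop :=
  Consistent F ∧ ∀ G : Set (Formula P V A), Consistent G → F ⊆ G → F = G

/-- A game. -/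
structure Game (P V A : Type) : Type 1 where
  W : Type
  sim : V → W → W → Prop
  sim_equiv : ∀ x : V, Equivalence (sim x)
  trust : W → Set V
  Δ : Type
  delta_nonempty : Nonempty Δ
  M : W → (A → Δ) → W → Prop
  pi : P → Set W

/-- `w ∼_X u`. -/
def Game.simSet (G : Game P V A) (X : Set V) (w u : G.W) : Prop :=
  ∀ x ∈ X, G.sim x w u

/-- The satisfaction relation `w ⊨ φ` (as `Sat G φ w`). -/
def Sat (G : Game P V A) : Formula P V A → G.W → Prop
  | Formula.atom p, w => w ∈ G.pi p
  | Formula.neg φ, w => ¬ Sat G φ w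
  | Formula.imp φ ψ, w => Sat G φ w → Sat G ψ w
  | Formula.bel T X φ, w =>
      ∀ u : G.W, G.simSet X w u → T ⊆ G.trust u → Sat G φ u
  | Formula.str C T X φ, w =>
      ∃ s : {a : A // a ∈ C} → G.Δ,
        ∀ (u v : G.W) (δ : A → G.Δ),
          G.simSet X w u → T ⊆ G.trust u →
          (∀ (a : A) (h : a ∈ C), s ⟨a, h⟩ = δ a) →
          G.M u δ v → T ⊆ G.trust v → Sat G φ v

/- ===================== Canonical game ===================== -/

/-- One block `X_i, b_i, T_i, F_i` of a canonical state. -/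
structure Block (P V A B : Type) where
  X : Set V
  b : B
  T : Set V
  F : Set (Formula P V A)

variable {B : Type}

/-- `F(w)`: the last set of formulae of the sequence (or `F0` for the root). -/
def cF (F0 : Set (Formula P V A)) (l : List (Block P V A B)) : Set (Formula P V A) :=
  l.getLast?.elim F0 Block.F

/-- `𝒯_w = T(w)`: the last dataset of the sequence (or `T0` for the root). -/
def cTrust (T0 : Set V) (l : List (Block P V A B)) : Set V :=
  l.getLast?.elim T0 Block.T

/-- Membership of a sequence in the set of canonical states `W`. -/
inductive IsState (T0 : Set V) (F0 : Set (Formula P V A)) :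
    List (Block P V A B) → Prop
  | nil :
      (∀ (Y : Set V) (ψ : Formula P V A),
        Formula.imp (Formula.bel T0 Y ψ) ψ ∈ F0) →
      IsState T0 F0 []
  | snoc {l : List (Block P V A B)} {bl : Block P V A B} :
      IsState T0 F0 l →
      MaximalConsistent bl.F →
      (∀ φ : Formula P V A, Formula.bel ∅ bl.X φ ∈ cF F0 l → φ ∈ bl.F) →
      (∀ (Y : Set V) (ψ : Formula P V A),
        Formula.imp (Formula.bel bl.T Y ψ) ψ ∈ bl.F) →
      IsState T0 F0 (l ++ [bl])

/-- The canonical states. -/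
def CState (T0 : Set V) (F0 : Set (Formula P V A)) (B : Type) : Type :=
  {l : List (Block P V A B) // IsState T0 F0 l}

attribute [local instance] Classical.propDecidable

/-- Length of the longest common prefix of two sequences. -/
noncomputable def cpl {α : Type} : List α → List α → Nat
  | a :: as, b :: bs => if a = b then cpl as bs + 1 else 0
  | _, _ => 0

/-- The blocks labelling the edges on the unique simple path between two
nodes of the canonical tree. -/
noncomputable def pathBlocks (w u : List (Block P V A B)) : List (Block P V A B) :=
  w.drop (cpl w u) ++ u.drop (cpl w u)

/-- `w ∼_x u` in the canonical game: every edge along the unique simple path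
between `w` and `u` is labelled with `x`. -/
def csimVar (x : V) (w u : List (Block P V A B)) : Prop :=
  ∀ bl ∈ pathBlocks w u, x ∈ bl.X

/-- `w ∼_X u` in the canonical game. -/
def csim (X : Set V) (w u : List (Block P V A B)) : Prop :=
  ∀ x ∈ X, csimVar x w u

/-- The canonical mechanism `M`. -/
def Mech (T0 : Set V) (F0 : Set (Formula P V A))
    (w : CState T0 F0 B) (δ : A → Formula P V A × CState T0 F0 B)
    (v : CState T0 F0 B) : Prop :=
  ∀ (C : Set A) (T X : Set V) (φ : Formula P V A),
    Formula.str C T X φ ∈ cF F0 w.1 →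
    (∀ a ∈ C, (δ a).1 = φ) →
    (∀ a ∈ C, csim X w.1 (δ a).2.1) →
    T ⊆ cTrust T0 w.1 → T ⊆ cTrust T0 v.1 →
    φ ∈ cF F0 v.1

/-- Satisfaction `w ⊨ φ` on the canonical game (as `CSat T0 F0 φ w`). -/
def CSat (T0 : Set V) (F0 : Set (Formula P V A)) :
    Formula P V A → CState T0 F0 B → Prop
  | Formula.atom p, w => Formula.atom p ∈ cF F0 w.1
  | Formula.neg φ, w => ¬ CSat T0 F0 φ w
  | Formula.imp φ ψ, w => CSat T0 F0 φ w → CSat T0 F0 ψ w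
  | Formula.bel T X φ, w =>
      ∀ u : CState T0 F0 B, csim X w.1 u.1 → T ⊆ cTrust T0 u.1 → CSat T0 F0 φ u
  | Formula.str C T X φ, w =>
      ∃ s : {a : A // a ∈ C} → Formula P V A × CState T0 F0 B,
        ∀ (u v : CState T0 F0 B) (δ : A → Formula P V A × CState T0 F0 B),
          csim X w.1 u.1 → T ⊆ cTrust T0 u.1 →
          (∀ (a : A) (h : a ∈ C), s ⟨a, h⟩ = δ a) →
          Mech T0 F0 u δ v → T ⊆ cTrust T0 v.1 → CSat T0 F0 φ v

/- ===================== Harmony ===================== -/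

/-- Conjunction definable from ¬ and →. -/
def fand (φ ψ : Formula P V A) : Formula P V A :=
  Formula.neg (Formula.imp φ (Formula.neg ψ))

/-- A canonical tautology (verum). -/
noncomputable def verum (P V A : Type) [Nonempty (Formula P V A)] : Formula P V A :=
  Formula.imp (Classical.arbitrary (Formula P V A)) (Classical.arbitrary (Formula P V A))

/-- Conjunction of a finite list of formulae. -/
noncomputable def conjList [Nonempty (Formula P V A)] :
    List (Formula P V A) → Formula P V A
  | [] => verum P V A
  | φ :: l => fand φ (conjList l)

/-- The pair `(F, G)` is in `T`-harmony: `F ⊬ [∅]^T_V ¬⋀G'` for each finite `G' ⊆ G`. -/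
def THarmony [Nonempty (Formula P V A)] (T : Set V)
    (F G : Set (Formula P V A)) : Prop :=
  ∀ l : List (Formula P V A), (∀ ψ ∈ l, ψ ∈ G) →
    ¬ Deduces F (Formula.str ∅ T (Set.univ : Set V) (Formula.neg (conjList l)))

section helpers
open Formula

theorem Deduces.mono' {F G : Set (Formula P V A)} (h : ∀ ψ ∈ F, Deduces G ψ) {φ : Formula P V A}
    (hd : Deduces F φ) : Deduces G φ := by
  induction hd with
  | thm h => exact .thm h
  | mem h' => exact h _ h'
  | mp _ _ h1 h2 => exact .mp h1 h2

theorem ded_directed {N Q : Set (Formula P V A)} (hne : Q.Nonempty)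
    (hdir : ∀ q1 ∈ Q, ∀ q2 ∈ Q, ∃ q3 ∈ Q, Thm (imp q3 q1) ∧ Thm (imp q3 q2))
    {φ : Formula P V A} (hd : Deduces (N ∪ Q) φ) : ∃ q ∈ Q, Deduces N (imp q φ) := by
  induction hd with
  | @thm φ h =>
    obtain ⟨q, hq⟩ := hne
    refine ⟨q, hq, .mp (.thm (.taut ?_)) (.thm h)⟩
    intro v hn hi; simp only [hi]; tauto
  | @mem φ h =>
    rcases h with h | h
    · obtain ⟨q, hq⟩ := hne
      refine ⟨q, hq, .mp (.thm (.taut ?_)) (.mem h)⟩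
      intro v hn hi; simp only [hi]; tauto
    · refine ⟨φ, h, .thm (.taut ?_)⟩
      intro v hn hi; simp only [hi]; tauto
  | @mp a b _ _ h1 h2 =>
    obtain ⟨q1, hq1, d1⟩ := h1
    obtain ⟨q2, hq2, d2⟩ := h2
    obtain ⟨q3, hq3, t1, t2⟩ := hdir q1 hq1 q2 hq2
    refine ⟨q3, hq3, .mp (.mp (.mp (.mp (.thm (.taut ?_)) (.thm t1)) (.thm t2)) d1) d2⟩
    intro v hn hi; simp only [hi]; tauto

theorem ded_single {N : Set (Formula P V A)} {q φ : Formula P V A}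
    (hd : Deduces (N ∪ {q}) φ) : Deduces N (imp q φ) := by
  have tt : Thm (imp q q) := .taut (by intro v hn hi; simp only [hi]; tauto)
  obtain ⟨q', hq', h⟩ := ded_directed (N := N) (Q := {q}) ⟨q, rfl⟩
    (by rintro _ rfl _ rfl; exact ⟨_, rfl, tt, tt⟩) hd
  cases hq'
  exact h

theorem ded_of_incons {G : Set (Formula P V A)} (h : ¬ Consistent G) (φ : Formula P V A) :
    Deduces G φ := by
  unfold Consistent at h
  push Not at h
  obtain ⟨a, h1, h2⟩ := h
  refine .mp (.mp (.thm (.taut ?_)) h1) h2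
  intro v hn hi; simp only [hi, hn]; tauto

theorem mcs_ded {F : Set (Formula P V A)} (hF : MaximalConsistent F) {φ : Formula P V A}
    (h : Deduces F φ) : φ ∈ F := by
  have hc : Consistent (insert φ F) := by
    rintro ⟨a, h1, h2⟩
    have key : ∀ ψ ∈ insert φ F, Deduces F ψ := by
      rintro ψ (rfl | hψ)
      · exact h
      · exact .mem hψ
    exact hF.1 ⟨a, h1.mono' key, h2.mono' key⟩
  have := hF.2 _ hc (Set.subset_insert _ _)
  rw [this]; exact Set.mem_insert _ _

theorem mcs_thm {F : Set (Formula P V A)} (hF : MaximalConsistent F) {φ : Formula P V A}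
    (h : Thm φ) : φ ∈ F := mcs_ded hF (.thm h)

theorem mcs_mp {F : Set (Formula P V A)} (hF : MaximalConsistent F) {φ ψ : Formula P V A}
    (h : imp φ ψ ∈ F) (h' : φ ∈ F) : ψ ∈ F := mcs_ded hF (.mp (.mem h) (.mem h'))

theorem mcs_tmp {F : Set (Formula P V A)} (hF : MaximalConsistent F) {φ ψ : Formula P V A}
    (h : Thm (imp φ ψ)) (h' : φ ∈ F) : ψ ∈ F := mcs_mp hF (mcs_thm hF h) h'

theorem mcs_neg {F : Set (Formula P V A)} (hF : MaximalConsistent F) {φ : Formula P V A} :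
    neg φ ∈ F ↔ φ ∉ F := by
  constructor
  · intro h h'
    exact hF.1 ⟨φ, .mem h', .mem h⟩
  · intro h
    have hc : ¬ Consistent (F ∪ {φ}) := by
      intro hc
      have := hF.2 _ hc Set.subset_union_left
      apply h; rw [this]; exact Or.inr rfl
    have := ded_single (ded_of_incons hc (neg φ))
    refine mcs_ded hF (.mp (.thm (.taut ?_)) this)
    intro v hn hi; simp only [hi, hn]; tauto

theorem mcs_imp {F : Set (Formula P V A)} (hF : MaximalConsistent F) {φ ψ : Formula P V A} :
    imp φ ψ ∈ F ↔ (φ ∈ F → ψ ∈ F) := by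
  constructor
  · exact fun h h' => mcs_mp hF h h'
  · intro h
    by_cases h' : φ ∈ F
    · refine mcs_tmp hF (.taut ?_) (h h')
      intro v hn hi; simp only [hi]; tauto
    · refine mcs_tmp hF (.taut ?_) ((mcs_neg hF).2 h')
      intro v hn hi; simp only [hi, hn]; tauto

theorem ded_sUnion {c : Set (Set (Formula P V A))} (hc : IsChain (· ⊆ ·) c) (hne : c.Nonempty)
    {φ : Formula P V A} (h : Deduces (⋃₀ c) φ) : ∃ s ∈ c, Deduces s φ := by
  induction h with
  | thm h => exact ⟨hne.some, hne.some_mem, .thm h⟩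
  | mem h => obtain ⟨s, hs, h⟩ := h; exact ⟨s, hs, .mem h⟩
  | mp _ _ h1 h2 =>
    obtain ⟨s, hs, h1⟩ := h1
    obtain ⟨t, ht, h2⟩ := h2
    rcases hc.total hs ht with hst | hst
    · exact ⟨t, ht, .mp (h1.mono' fun ψ hψ => .mem (hst hψ)) h2⟩
    · exact ⟨s, hs, .mp h1 (h2.mono' fun ψ hψ => .mem (hst hψ))⟩

theorem lindenbaum {G : Set (Formula P V A)} (hG : Consistent G) :
    ∃ F, MaximalConsistent F ∧ G ⊆ F := by
  obtain ⟨F, hGF, hF⟩ := zorn_subset_nonempty {F : Set (Formula P V A) | Consistent F} (by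
    intro c hcs hc hne
    refine ⟨⋃₀ c, ?_, fun s hs => Set.subset_sUnion_of_mem hs⟩
    rintro ⟨a, h1, h2⟩
    obtain ⟨s, hs, h1⟩ := ded_sUnion hc hne h1
    obtain ⟨t, ht, h2⟩ := ded_sUnion hc hne h2
    rcases hc.total hs ht with hst | hst
    · exact hcs ht ⟨a, h1.mono' fun ψ hψ => .mem (hst hψ), h2⟩
    · exact hcs hs ⟨a, h1, h2.mono' fun ψ hψ => .mem (hst hψ)⟩) G hG
  exact ⟨F, ⟨hF.prop, fun H hH hFH => Set.Subset.antisymm hFH (hF.le_of_ge hH hFH)⟩, hGF⟩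

theorem thm_nec {φ : Formula P V A} (T X : Set V) (h : Thm φ) : Thm (bel T X φ) :=
  .mp (.monoB (Set.empty_subset _) (Set.empty_subset _)) (.nec h)

theorem thm_snec {φ : Formula P V A} (T X : Set V) (h : Thm φ) :
    Thm (str (∅ : Set A) T X φ) :=
  .mp (.monoS (Set.Subset.refl _) (Set.empty_subset _) (Set.Subset.refl _))
    (.mp .pub (thm_nec T ∅ h))

theorem mcs_posIntro {F : Set (Formula P V A)} (hF : MaximalConsistent F) {φ : Formula P V A}
    {T X : Set V} (h : bel T X φ ∈ F) : bel ∅ X (bel T X φ) ∈ F := by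
  have t : Thm (imp (neg (bel ∅ X (neg (bel T X φ)))) (bel T X φ)) := by
    refine .mp (.taut ?_) (Thm.negIntro (T := T) (X := X) (φ := φ))
    intro v hn hi; simp only [hi, hn]; tauto
  refine mcs_mp hF (mcs_tmp hF .distrib (mcs_thm hF (thm_nec ∅ X t))) ?_
  refine mcs_tmp hF .negIntro ?_
  rw [mcs_neg hF]
  intro h'
  exact (mcs_neg hF).1 (mcs_tmp hF .truth h') h

/- closure of belief sets -/
theorem bel_closed {F : Set (Formula P V A)} (hF : MaximalConsistent F) {T X : Set V}
    {φ : Formula P V A} (h : Deduces {ψ | bel T X ψ ∈ F} φ) : bel T X φ ∈ F := by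
  induction h with
  | thm h => exact mcs_thm hF (thm_nec _ _ h)
  | mem h => exact h
  | mp _ _ h1 h2 => exact mcs_mp hF (mcs_tmp hF .distrib h1) h2

theorem str_mp {F : Set (Formula P V A)} (hF : MaximalConsistent F) {T X : Set V}
    {φ ψ : Formula P V A} (h : str (∅ : Set A) T X (imp φ ψ) ∈ F)
    (h' : str (∅ : Set A) T X φ ∈ F) : str (∅ : Set A) T X ψ ∈ F := by
  have := mcs_mp hF (mcs_tmp hF (.coop (by simp)) h) h'
  simpa using this

theorem str_closed {F : Set (Formula P V A)} (hF : MaximalConsistent F) {T X : Set V}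
    {φ : Formula P V A} (h : Deduces {ψ | str (∅ : Set A) T X ψ ∈ F} φ) :
    str (∅ : Set A) T X φ ∈ F := by
  induction h with
  | thm h => exact mcs_thm hF (thm_snec _ _ h)
  | mem h => exact h
  | mp _ _ h1 h2 => exact str_mp hF h1 h2

/- iterated implication -/
def imps : List (Formula P V A) → Formula P V A → Formula P V A
  | [], φ => φ
  | ψ :: l, φ => imp ψ (imps l φ)

theorem imps_val {v : Formula P V A → Prop} (hi : ∀ ψ χ, v (imp ψ χ) ↔ (v ψ → v χ))
    (l : List (Formula P V A)) (φ : Formula P V A) :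
    v (imps l φ) ↔ ((∀ ψ ∈ l, v ψ) → v φ) := by
  induction l with
  | nil => simp [imps]
  | cons a l ih => simp [imps, hi, ih]

theorem imps_mono {l l' : List (Formula P V A)} (h : l ⊆ l') (φ : Formula P V A) :
    Thm (imp (imps l φ) (imps l' φ)) := by
  refine .taut ?_
  intro v hn hi
  rw [hi, imps_val hi, imps_val hi]
  exact fun h1 h2 => h1 fun ψ hψ => h2 ψ (h hψ)

theorem ded_list {K S : Set (Formula P V A)} {φ : Formula P V A} (h : Deduces (K ∪ S) φ) :
    ∃ l : List (Formula P V A), (∀ ψ ∈ l, ψ ∈ S) ∧ Deduces K (imps l φ) := by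
  induction h with
  | thm h => exact ⟨[], by simp, .thm h⟩
  | @mem φ h =>
    rcases h with h | h
    · exact ⟨[], by simp, .mem h⟩
    · refine ⟨[φ], by simpa using h, .thm (.taut ?_)⟩
      intro v hn hi; simp [imps, hi]
  | @mp a b _ _ h1 h2 =>
    obtain ⟨l1, hl1, d1⟩ := h1
    obtain ⟨l2, hl2, d2⟩ := h2
    refine ⟨l1 ++ l2, ?_, .mp (.mp (.thm (.taut ?_)) d1) d2⟩
    · intro ψ hψ
      rcases List.mem_append.1 hψ with h | h
      · exact hl1 _ h
      · exact hl2 _ h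
    · intro v hn hi
      simp only [hi, imps_val hi, List.mem_append]
      intro h1 h2 h3
      exact h1 (fun ψ h => h3 ψ (Or.inl h)) (h2 fun ψ h => h3 ψ (Or.inr h))

theorem coop_list {F : Set (Formula P V A)} (hF : MaximalConsistent F) {T X : Set V}
    {D : Formula P V A → Set A} (hD : ∀ a b, a ≠ b → D a ∩ D b = ∅) {C : Set A}
    (hDC : ∀ a, D a ⊆ C) {φ : Formula P V A} (l : List (Formula P V A)) (hn : l.Nodup)
    (hl : ∀ ψ ∈ l, str (D ψ) T X ψ ∈ F) (E : Set A) (hE : ∀ ψ ∈ l, E ∩ D ψ = ∅) (hEC : E ⊆ C)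
    (h : str E T X (imps l φ) ∈ F) : str C T X φ ∈ F := by
  induction l generalizing E with
  | nil => exact mcs_tmp hF (.monoS (Set.Subset.refl _) (Set.Subset.refl _) hEC) h
  | cons a l ih =>
    have h2 := mcs_mp hF (mcs_tmp hF (.coop (hE a (by simp))) h) (hl a (by simp))
    refine ih (List.nodup_cons.1 hn).2 (fun ψ hψ => hl ψ (by simp [hψ])) (E ∪ D a) ?_
      (Set.union_subset hEC (hDC a)) h2
    intro ψ hψ
    rw [Set.union_inter_distrib_right, hE ψ (by simp [hψ]), hD a ψ, Set.union_empty]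
    rintro rfl
    exact (List.nodup_cons.1 hn).1 hψ

/- tree lemmas -/
theorem cpl_comm {α : Type} (l t : List α) : cpl l t = cpl t l := by
  induction l generalizing t with
  | nil => cases t <;> simp [cpl]
  | cons a l ih =>
    cases t with
    | nil => simp [cpl]
    | cons b t => simp only [cpl, ih t, eq_comm]

theorem cpl_append {α : Type} (l t : List α) : cpl l (l ++ t) = l.length := by
  induction l with
  | nil => cases t <;> simp [cpl]
  | cons a l ih => simp [cpl, ih]

theorem cpl_take {α : Type} (l t : List α) : l.take (cpl l t) = t.take (cpl l t) := by
  induction l generalizing t with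
  | nil => cases t <;> simp [cpl]
  | cons a l ih =>
    cases t with
    | nil => simp [cpl]
    | cons b t =>
      by_cases h : a = b
      · simp [cpl, h, ih t]
      · simp [cpl, h]

theorem cpl_last {α : Type} (l t : List α) (x : α) :
    (l ++ [x]) <+: t ∨ x ∈ (l ++ [x]).drop (cpl (l ++ [x]) t) := by
  induction l generalizing t with
  | nil =>
    cases t with
    | nil => simp [cpl]
    | cons b t =>
      by_cases h : x = b
      · left; simp [h]
      · right; simp [cpl, h]
  | cons a l ih =>
    cases t with
    | nil => right; simp [cpl]
    | cons b t =>
      by_cases h : a = b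
      · rcases ih t with h' | h'
        · left; simpa [h] using h'
        · right; simpa [cpl, h] using h'
      · right; simp [cpl, h]

theorem csim_symm {X : Set V} {w u : List (Block P V A B)} (h : csim X w u) : csim X u w := by
  intro x hx bl hbl
  apply h x hx
  unfold pathBlocks at *
  rw [cpl_comm]
  rw [List.mem_append] at *
  tauto

theorem csim_snoc {X : Set V} (w : List (Block P V A B)) {bl : Block P V A B} (h : X ⊆ bl.X) :
    csim X w (w ++ [bl]) := by
  intro x hx b hb
  simp [pathBlocks, cpl_append] at hb
  subst hb
  exact h hx

theorem state_inv {T0 : Set V} {F0 : Set (Formula P V A)} {l : List (Block P V A B)}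
    {bl : Block P V A B} (h : IsState T0 F0 (l ++ [bl])) :
    IsState T0 F0 l ∧ MaximalConsistent bl.F ∧
      (∀ φ : Formula P V A, bel ∅ bl.X φ ∈ cF F0 l → φ ∈ bl.F) ∧
      (∀ (Y : Set V) (ψ : Formula P V A), imp (bel bl.T Y ψ) ψ ∈ bl.F) := by
  generalize hm : l ++ [bl] = m at h
  cases h with
  | nil => simp at hm
  | @snoc l' bl' h1 h2 h3 h4 =>
    obtain ⟨rfl, h⟩ := List.append_inj' hm rfl
    obtain rfl : bl = bl' := by simpa using h
    exact ⟨h1, h2, h3, h4⟩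

@[simp] theorem cF_snoc (F0 : Set (Formula P V A)) (l : List (Block P V A B))
    (bl : Block P V A B) : cF F0 (l ++ [bl]) = bl.F := by simp [cF]

@[simp] theorem cTrust_snoc (T0 : Set V) (l : List (Block P V A B))
    (bl : Block P V A B) : cTrust T0 (l ++ [bl]) = bl.T := by simp [cTrust]

theorem state_mcs {T0 : Set V} {F0 : Set (Formula P V A)} (hF0 : MaximalConsistent F0)
    {l : List (Block P V A B)} (h : IsState T0 F0 l) : MaximalConsistent (cF F0 l) := by
  cases h with
  | nil => exact hF0
  | snoc _ h => simpa using h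

theorem state_trust {T0 : Set V} {F0 : Set (Formula P V A)}
    {l : List (Block P V A B)} (h : IsState T0 F0 l) (Y : Set V) (ψ : Formula P V A) :
    imp (bel (cTrust T0 l) Y ψ) ψ ∈ cF F0 l := by
  cases h with
  | nil h => exact h Y ψ
  | snoc _ _ _ h => simpa using h Y ψ

theorem transport {T0 : Set V} {F0 : Set (Formula P V A)} (hF0 : MaximalConsistent F0)
    {c d : List (Block P V A B)} (h : IsState T0 F0 (c ++ d)) {T X : Set V}
    (hX : ∀ bl ∈ d, X ⊆ bl.X) (φ : Formula P V A) :
    bel T X φ ∈ cF F0 c ↔ bel T X φ ∈ cF F0 (c ++ d) := by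
  induction d using List.reverseRecOn with
  | nil => simp
  | append_singleton d bl ih =>
    rw [← List.append_assoc] at h ⊢
    obtain ⟨h1, h2, h3, h4⟩ := state_inv h
    have hm := state_mcs hF0 h1
    have hbl : X ⊆ bl.X := hX bl (by simp)
    rw [ih h1 (fun b hb => hX b (by simp [hb])), cF_snoc]
    constructor
    · intro h
      exact h3 _ (mcs_tmp hm (.monoB (Set.Subset.refl _) hbl) (mcs_posIntro hm h))
    · intro h
      by_contra hc
      have := h3 _ (mcs_tmp hm (.monoB (Set.Subset.refl _) hbl)
        (mcs_tmp hm .negIntro ((mcs_neg hm).2 hc)))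
      exact (mcs_neg h2).1 this h

theorem bel_sim {T0 : Set V} {F0 : Set (Formula P V A)} (hF0 : MaximalConsistent F0)
    {w u : List (Block P V A B)} (hw : IsState T0 F0 w) (hu : IsState T0 F0 u) {T X : Set V}
    (hs : csim X w u) {φ : Formula P V A} (h : bel T X φ ∈ cF F0 w)
    (hT : T ⊆ cTrust T0 u) : φ ∈ cF F0 u := by
  have e1 := List.take_append_drop (cpl w u) w
  have e2 := List.take_append_drop (cpl w u) u
  rw [← cpl_take] at e2
  have hb : ∀ bl ∈ pathBlocks w u, X ⊆ bl.X := fun bl hbl x hx => hs x hx bl hbl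
  have t1 := transport (T := T) (X := X) hF0 (by rw [e1]; exact hw)
    (fun bl hbl => hb bl (List.mem_append.2 (Or.inl hbl))) φ
  have t2 := transport (T := T) (X := X) hF0 (by rw [e2]; exact hu)
    (fun bl hbl => hb bl (List.mem_append.2 (Or.inr hbl))) φ
  rw [e1] at t1
  rw [e2] at t2
  have h' := t2.1 (t1.2 h)
  have hm := state_mcs hF0 hu
  exact mcs_mp hm (state_trust hu X φ) (mcs_tmp hm (.monoB hT (Set.Subset.refl _)) h')

/-- extending a state by a block believed possible. -/
theorem state_ext {T0 : Set V} {F0 : Set (Formula P V A)} (hF0 : MaximalConsistent F0)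
    {w : List (Block P V A B)} (hw : IsState T0 F0 w) {T X : Set V}
    {F : Set (Formula P V A)} (hF : MaximalConsistent F)
    (h : {ψ | bel T X ψ ∈ cF F0 w} ⊆ F) (b : B) : IsState T0 F0 (w ++ [⟨X, b, T, F⟩]) := by
  have hm := state_mcs hF0 hw
  refine .snoc hw hF ?_ ?_
  · intro φ hφ
    exact h (mcs_tmp hm (.monoB (Set.empty_subset _) (Set.Subset.refl _)) hφ)
  · intro Y ψ
    exact h (mcs_thm hm .trust)

theorem bel_wit {F : Set (Formula P V A)} (hF : MaximalConsistent F) {T X : Set V}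
    {φ : Formula P V A} (h : bel T X φ ∉ F) :
    ∃ G, MaximalConsistent G ∧ {ψ | bel T X ψ ∈ F} ⊆ G ∧ φ ∉ G := by
  have hc : Consistent ({ψ | bel T X ψ ∈ F} ∪ {neg φ}) := by
    by_contra hc
    have := ded_single (ded_of_incons hc φ)
    apply h
    refine bel_closed hF (.mp (.thm (.taut ?_)) this)
    intro v hn hi; simp only [hi, hn]; tauto
  obtain ⟨G, hG, hs⟩ := lindenbaum hc
  exact ⟨G, hG, fun ψ hψ => hs (Or.inl hψ), (mcs_neg hG).1 (hs (Or.inr rfl))⟩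

/-- The pair of maximal consistent sets refuting `[C]^T_X φ` against a given vote. -/
theorem str_wit {F : Set (Formula P V A)} (hF : MaximalConsistent F) {C : Set A} {T X : Set V}
    {φ : Formula P V A} (h : str C T X φ ∉ F)
    (D : Formula P V A → Set A) (hD : ∀ a b, a ≠ b → D a ∩ D b = ∅) (hDC : ∀ a, D a ⊆ C) :
    ∃ G H, MaximalConsistent G ∧ MaximalConsistent H ∧ {ψ | bel T X ψ ∈ F} ⊆ G ∧
      {ψ | str (∅ : Set A) T Set.univ ψ ∈ G} ⊆ H ∧ {ψ | str (D ψ) T X ψ ∈ F} ⊆ H ∧ φ ∉ H := by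
  set S : Set (Formula P V A) := {ψ | str (D ψ) T X ψ ∈ F} with hS
  let q : List (Formula P V A) → Formula P V A :=
    fun l => neg (str (∅ : Set A) T Set.univ (imps l φ))
  let Q : Set (Formula P V A) := {χ | ∃ l : List (Formula P V A), (∀ ψ ∈ l, ψ ∈ S) ∧ χ = q l}
  have qm : ∀ l l' : List (Formula P V A), l ⊆ l' → Thm (imp (q l') (q l)) := by
    intro l l' hl
    have t : Thm (imp (str (∅ : Set A) T (Set.univ : Set V) (imps l φ))
        (str (∅ : Set A) T Set.univ (imps l' φ))) := by
      have := Thm.mp (.coop (C := ∅) (D := ∅) (by simp))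
        (thm_snec (A := A) T Set.univ (imps_mono hl φ))
      simpa using this
    refine .mp (.taut ?_) t
    intro v hn hi; simp only [hi, hn, q]; tauto
  have hc : Consistent ({ψ | bel T X ψ ∈ F} ∪ Q) := by
    by_contra hc
    obtain ⟨_, ⟨l, hl, rfl⟩, hd⟩ := ded_directed (Q := Q) ⟨q [], [], by simp, rfl⟩ (by
      rintro _ ⟨l1, h1, rfl⟩ _ ⟨l2, h2, rfl⟩
      refine ⟨q (l1 ++ l2), ⟨l1 ++ l2, ?_, rfl⟩, qm _ _ (by simp), qm _ _ (by simp)⟩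
      intro ψ hψ
      rcases List.mem_append.1 hψ with h | h
      · exact h1 _ h
      · exact h2 _ h) (ded_of_incons hc (str (∅ : Set A) T Set.univ (imps [] φ)))
    have hd' : Deduces {ψ | bel T X ψ ∈ F} (str (∅ : Set A) T Set.univ (imps l.dedup φ)) := by
      refine .mp (.mp (.mp (.thm (.taut ?_)) (.thm (qm l l.dedup ?_)))
        (.thm (qm [] l.dedup (by simp)))) hd
      · intro v hn hi; simp only [hi, hn, q]; tauto
      · intro x hx; exact List.mem_dedup.2 hx
    have h1 := mcs_tmp hF .unavoid (bel_closed hF hd')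
    exact h (coop_list hF hD hDC l.dedup (List.nodup_dedup _)
      (fun ψ hψ => hl ψ (List.mem_dedup.1 hψ)) ∅ (by simp) (by simp) h1)
  obtain ⟨G, hG, hs⟩ := lindenbaum hc
  have hc2 : Consistent (({ψ | str (∅ : Set A) T Set.univ ψ ∈ G} ∪ S) ∪ {neg φ}) := by
    by_contra hc
    have h1 := ded_single (ded_of_incons hc φ)
    have h2 : Deduces ({ψ | str (∅ : Set A) T Set.univ ψ ∈ G} ∪ S) φ := by
      refine .mp (.thm (.taut ?_)) h1
      intro v hn hi; simp only [hi, hn]; tauto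
    obtain ⟨l, hl, hd⟩ := ded_list h2
    exact (mcs_neg hG).1 (hs (Or.inr ⟨l, hl, rfl⟩)) (str_closed hG hd)
  obtain ⟨H, hH, hs2⟩ := lindenbaum hc2
  exact ⟨G, H, hG, hH, fun ψ hψ => hs (Or.inl hψ), fun ψ hψ => hs2 (Or.inl (Or.inl hψ)),
    fun ψ hψ => hs2 (Or.inl (Or.inr hψ)), (mcs_neg hH).1 (hs2 (Or.inr rfl))⟩

theorem fresh (hB : Cardinal.mk A < Cardinal.mk B) (C : Set A)
    (t : A → List (Block P V A B)) (w : List (Block P V A B)) (X T : Set V)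
    (G : Set (Formula P V A)) : ∃ b : B, ∀ a ∈ C, ¬ (w ++ [⟨X, b, T, G⟩]) <+: t a := by
  by_contra! hc
  choose g _ hg using hc
  refine absurd (Cardinal.mk_le_of_injective (f := g) ?_) (not_le.2 hB)
  intro b b' hbb
  have h1 := hg b
  have h2 := hg b'
  rw [hbb] at h1
  have := (List.prefix_of_prefix_length_le h1 h2 (by simp)).eq_of_length (by simp)
  simpa using this

end helpers

/-- Truth lemma: for each state w of the canonical game and each formula φ,
w ⊨ φ iff φ ∈ F(w). -/
theorem truth_lemma {P V A B : Type}
    (T0 : Set V) (F0 : Set (Formula P V A))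
    (hF0 : MaximalConsistent F0) (hB : Cardinal.mk A < Cardinal.mk B)
    (w : CState T0 F0 B) (φ : Formula P V A) :
    CSat T0 F0 φ w ↔ φ ∈ cF F0 w.1 := by
  induction φ generalizing w with
  | atom p => simp [CSat]
  | neg φ ih => rw [CSat, ih, mcs_neg (state_mcs hF0 w.2)]
  | imp φ ψ ih1 ih2 => rw [CSat, ih1, ih2, mcs_imp (state_mcs hF0 w.2)]
  | bel T X φ ih =>
    rw [CSat]
    constructor
    · intro h
      by_contra hc
      obtain ⟨G, hG, hs, hφ⟩ := bel_wit (state_mcs hF0 w.2) hc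
      have hne : Nonempty B := by
        rw [← Cardinal.mk_ne_zero_iff]
        exact (lt_of_le_of_lt (zero_le) hB).ne'
      obtain ⟨b⟩ := hne
      have hu := state_ext hF0 w.2 hG hs b
      have := (ih ⟨_, hu⟩).1 (h ⟨_, hu⟩ (csim_snoc _ (Set.Subset.refl _)) (by simp))
      rw [cF_snoc] at this
      exact hφ this
    · intro h u hs hT
      exact (ih u).2 (bel_sim hF0 w.2 u.2 hs h hT)
  | str C T X φ ih =>
    rw [CSat]
    have hm := state_mcs hF0 w.2
    constructor
    · rintro ⟨s, h⟩
      by_contra hc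
      let δ : A → Formula P V A × CState T0 F0 B :=
        fun a => if ha : a ∈ C then s ⟨a, ha⟩ else (Formula.imp φ φ, w)
      let D : Formula P V A → Set A := fun ψ => {a | a ∈ C ∧ (δ a).1 = ψ}
      obtain ⟨G, H, hG, hH, hFG, hGH, hSH, hφ⟩ := str_wit hm hc D (by
        intro a b hab
        ext x
        simp only [D, Set.mem_inter_iff, Set.mem_ofPred_eq, Set.mem_empty_iff_false, iff_false]
        rintro ⟨⟨_, h1⟩, ⟨_, h2⟩⟩
        exact hab (h1.symm.trans h2)) (fun ψ a ha => ha.1)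
      obtain ⟨b, hb⟩ := fresh hB C (fun a => (δ a).2.1) w.1 X T G
      have hu := state_ext hF0 w.2 hG hFG b
      have hv : IsState T0 F0 ((w.1 ++ [⟨X, b, T, G⟩]) ++ [⟨∅, b, T, H⟩]) := by
        apply state_ext hF0 hu hH
        intro ψ hψ
        simp only [Set.mem_ofPred_eq, cF_snoc] at hψ
        exact hGH (mcs_tmp hG (.monoS (Set.Subset.refl _) (Set.empty_subset _)
          (Set.Subset.refl _)) (mcs_tmp hG .pub hψ))
      have key := (ih ⟨_, hv⟩).1 (h ⟨_, hu⟩ ⟨_, hv⟩ δ (csim_snoc _ (Set.Subset.refl _)) (by simp)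
        (by intro a ha; simp [δ, ha]) ?_ (by rw [cTrust_snoc]))
      · rw [cF_snoc] at key
        exact hφ key
      · intro C' T' Y ψ hψ h1 h2 hT _
        rw [cF_snoc] at hψ ⊢
        rw [cTrust_snoc] at hT
        change T' ⊆ T at hT
        change Formula.str C' T' Y ψ ∈ G at hψ
        change ψ ∈ H
        by_cases hCC : C' ⊆ C
        · by_cases hne : C' = ∅
          · subst hne
            exact hGH (mcs_tmp hG (.monoS hT (Set.subset_univ _) (Set.Subset.refl _)) hψ)
          · obtain ⟨a, ha⟩ := Set.nonempty_iff_ne_empty.2 hne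
            have hYX : Y ⊆ X := by
              intro y hy
              have hmem := (cpl_last w.1 (δ a).2.1 ⟨X, b, T, G⟩).resolve_left (hb a (hCC ha))
              exact h2 a ha y hy _ (List.mem_append.2 (Or.inl hmem))
            have hG' : Formula.str (D ψ) T X ψ ∈ G :=
              mcs_tmp hG (.monoS hT hYX (fun x hx => ⟨hCC hx, h1 x hx⟩)) hψ
            apply hSH
            change Formula.str (D ψ) T X ψ ∈ cF F0 w.1
            by_contra hn
            have hn2 : Formula.bel T X (Formula.str (D ψ) T X ψ) ∉ cF F0 w.1 :=
              fun hx => hn (mcs_tmp hm .strIntro₂ hx)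
            have hn3 := mcs_tmp hm .negIntro ((mcs_neg hm).2 hn2)
            have hn4 := hFG (mcs_tmp hm (.monoB (Set.empty_subset T) (Set.Subset.refl _)) hn3)
            exact (mcs_neg hG).1 hn4 (mcs_tmp hG .strIntro₁ hG')
        · obtain ⟨a, ha, haC⟩ := Set.not_subset.1 hCC
          have : ψ = Formula.imp φ φ := by
            rw [← h1 a ha]; simp [δ, haC]
          subst this
          exact (mcs_imp hH).2 id
    · intro h
      refine ⟨fun _ => (φ, w), ?_⟩
      intro u v δ hs hT hδ hM hTv
      rw [ih]
      have h1 := bel_sim hF0 w.2 u.2 hs (mcs_tmp hm .strIntro₁ h) hT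
      exact hM C T X φ h1 (fun a ha => by rw [← hδ a ha])
        (fun a ha => by rw [← hδ a ha]; exact csim_symm hs) hT hTv
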